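/- Let ρ = [[A, B],[B†, C]] be a 2d×2d positive semidefinite matrix with A positive definite, whose partial transpose is also positive semidefinite (PPT). If B†A⁻¹B = BA⁻¹B†, then ρ is separable on ℂ²⊗ℂᵈ. -/

import Mathlib

open Matrix Kronecker Finset ComplexOrder

/-- 2x2 block matrix with n×n blocks, indexed by `Fin 2 × n`. -/
def blk {n : Type*} (A B C D : Matrix n n ℂ) :
    Matrix (Fin 2 × n) (Fin 2 × n) ℂ := fun p q =>
  if p.1 = 0 then (if q.1 = 0 then A p.2 q.2 else B p.2 q.2)
  else (if q.1 = 0 then C p.2 q.2 else D p.2 q.2)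

/-- Partial transpose on the first (qubit) factor. -/
def ptA {n : Type*} (ρ : Matrix (Fin 2 × n) (Fin 2 × n) ℂ) :
    Matrix (Fin 2 × n) (Fin 2 × n) ℂ := fun p q => ρ (q.1, p.2) (p.1, q.2)

/-- Separability of an (unnormalized) state on ℂ²⊗ℂⁿ. -/
def SepState {n : Type*} [Fintype n] (ρ : Matrix (Fin 2 × n) (Fin 2 × n) ℂ) : Prop :=
  ∃ (N : ℕ) (σ : Fin N → Matrix (Fin 2) (Fin 2) ℂ) (P : Fin N → Matrix n n ℂ),
    (∀ i, (σ i).PosSemidef) ∧ (∀ i, (P i).PosSemidef) ∧ ρ = ∑ i, σ i ⊗ₖ P i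

lemma sepState_of_fintype {n ι : Type*} [Fintype n] [Fintype ι]
    (ρ : Matrix (Fin 2 × n) (Fin 2 × n) ℂ) (σ : ι → Matrix (Fin 2) (Fin 2) ℂ)
    (P : ι → Matrix n n ℂ) (hσ : ∀ i, (σ i).PosSemidef) (hP : ∀ i, (P i).PosSemidef)
    (h : ρ = ∑ i, σ i ⊗ₖ P i) : SepState ρ := by
  refine ⟨Fintype.card ι, fun k => σ ((Fintype.equivFin ι).symm k),
    fun k => P ((Fintype.equivFin ι).symm k), fun _ => hσ _, fun _ => hP _, ?_⟩
  rw [h]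
  exact ((Fintype.equivFin ι).symm.sum_comp (fun i => σ i ⊗ₖ P i)).symm

section
open scoped Matrix.Norms.L2Operator MatrixOrder

/-- Spectral decomposition of a normal matrix with positive semidefinite projections. -/
lemma normal_decomp {n : Type*} [Fintype n] [DecidableEq n] (X : Matrix n n ℂ)
    (hX : Xᴴ * X = X * Xᴴ) :
    ∃ (s : Finset ℂ) (P : ℂ → Matrix n n ℂ), (∀ z, (P z).PosSemidef) ∧
      ∑ z ∈ s, P z = 1 ∧ ∑ z ∈ s, z • P z = X ∧ ∑ z ∈ s, (star z * z) • P z = Xᴴ * X := by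
  have hn : IsStarNormal X := ⟨hX⟩
  have hfin : (spectrum ℂ X).Finite := Matrix.finite_spectrum X
  have hc : ∀ f : ℂ → ℂ, ContinuousOn f (spectrum ℂ X) := fun f => hfin.continuousOn f
  let e : ℂ → ℂ → ℂ := fun z x => if x = z then 1 else 0
  have key : ∀ f : ℂ → ℂ, ∑ z ∈ hfin.toFinset, f z • cfc (e z) X = cfc f X := by
    intro f
    have h1 : ∀ z ∈ hfin.toFinset, f z • cfc (e z) X = cfc (fun x => f z * e z x) X :=
      fun z _ => (cfc_const_mul (f z) (e z) X (hc _)).symm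
    rw [Finset.sum_congr rfl h1, ← cfc_sum _ _ _ (fun i _ => hc _)]
    apply cfc_congr
    intro x hx
    have hx' : x ∈ hfin.toFinset := by simpa using hx
    simp only [Finset.sum_apply, e, mul_ite, mul_one, mul_zero]
    rw [Finset.sum_ite_eq, if_pos hx']
  refine ⟨hfin.toFinset, fun z => cfc (e z) X, fun z => ?_, ?_, ?_, ?_⟩
  · have : cfc (e z) X = (cfc (e z) X)ᴴ * cfc (e z) X := by
      rw [← star_eq_conjTranspose, ← cfc_star, ← cfc_mul _ _ _ (hc _) (hc _)]
      congr 1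
      ext x
      by_cases h : x = z <;> simp [e, h]
    show (cfc (e z) X).PosSemidef
    rw [this]
    exact posSemidef_conjTranspose_mul_self _
  · have := key (fun _ => 1)
    simp only [one_smul] at this
    rw [this, cfc_const_one ℂ X]
  · have := key (fun z => z)
    rw [this, cfc_id' ℂ X]
  · have := key (fun z => star z * z)
    rw [this, cfc_mul _ _ _ (hc _) (hc _), cfc_star, cfc_id' ℂ X, star_eq_conjTranspose]

lemma exists_sqrt {n : Type*} [Fintype n] [DecidableEq n] (A : Matrix n n ℂ) (hA : A.PosDef) :
    ∃ M : Matrix n n ℂ, IsUnit M ∧ A = Mᴴ * M := by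
  obtain ⟨M, hM⟩ := CStarAlgebra.nonneg_iff_eq_star_mul_self.mp hA.posSemidef.nonneg
  rw [star_eq_conjTranspose] at hM
  refine ⟨M, ?_, hM⟩
  have := hA.isUnit
  rw [hM] at this
  exact isUnit_of_mul_isUnit_right this

end

lemma schur_psd {n : Type*} [Fintype n] [DecidableEq n] (A B C : Matrix n n ℂ) (hA : A.PosDef)
    (hρ : (blk A B Bᴴ C).PosSemidef) : (C - Bᴴ * A⁻¹ * B).PosSemidef := by
  have : Invertible A := hA.isUnit.invertible
  rw [← hA.fromBlocks₁₁ B C]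
  have h := hρ.submatrix (Sum.elim (fun i => ((0 : Fin 2), i)) (fun i => ((1 : Fin 2), i)))
  have h2 : fromBlocks A B Bᴴ C = (blk A B Bᴴ C).submatrix
      (Sum.elim (fun i => ((0 : Fin 2), i)) (fun i => ((1 : Fin 2), i)))
      (Sum.elim (fun i => ((0 : Fin 2), i)) (fun i => ((1 : Fin 2), i))) := by
    ext (i | i) (j | j) <;> simp [blk]
  rw [h2]
  exact h

theorem stmt6 {d : ℕ} (A B C : Matrix (Fin d) (Fin d) ℂ) (hA : A.PosDef)
    (hρ : (blk A B Bᴴ C).PosSemidef)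
    (hppt : (blk A Bᴴ B C).PosSemidef)
    (hcond : Bᴴ * A⁻¹ * B = B * A⁻¹ * Bᴴ) :
    SepState (blk A B Bᴴ C) := by
  have hS := schur_psd A B C hA hρ
  obtain ⟨M, hM, hAM⟩ := exists_sqrt A hA
  have hd : IsUnit M.det := (Matrix.isUnit_iff_isUnit_det M).mp hM
  have hdH : IsUnit Mᴴ.det := by rw [det_conjTranspose]; exact hd.star
  have hAi : A⁻¹ = M⁻¹ * Mᴴ⁻¹ := by rw [hAM, Matrix.mul_inv_rev]
  set X := Mᴴ⁻¹ * B * M⁻¹ with hXdef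
  have hXH : Xᴴ = Mᴴ⁻¹ * Bᴴ * M⁻¹ := by
    simp [hXdef, conjTranspose_mul, conjTranspose_nonsing_inv, Matrix.mul_assoc]
  have hXX : Xᴴ * X = Mᴴ⁻¹ * (Bᴴ * A⁻¹ * B) * M⁻¹ := by
    rw [hXH, hXdef, hAi]; simp only [Matrix.mul_assoc]
  have hXX' : X * Xᴴ = Mᴴ⁻¹ * (B * A⁻¹ * Bᴴ) * M⁻¹ := by
    rw [hXH, hXdef, hAi]; simp only [Matrix.mul_assoc]
  have hcancel : ∀ Y : Matrix (Fin d) (Fin d) ℂ, Mᴴ * (Mᴴ⁻¹ * Y * M⁻¹) * M = Y := by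
    intro Y
    rw [Matrix.mul_assoc Mᴴ⁻¹, Matrix.mul_nonsing_inv_cancel_left _ _ hdH,
      Matrix.nonsing_inv_mul_cancel_right _ _ hd]
  obtain ⟨s, P, hP, h1, hX, hN⟩ := normal_decomp X (by rw [hXX, hXX', hcond])
  let Q : ℂ → Matrix (Fin d) (Fin d) ℂ := fun z => Mᴴ * P z * M
  have hQ : ∀ z, (Q z).PosSemidef := fun z => (hP z).conjTranspose_mul_mul_same M
  have hsum : ∀ f : ℂ → ℂ, ∑ z ∈ s, f z • Q z = Mᴴ * (∑ z ∈ s, f z • P z) * M := by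
    intro f
    simp [Q, Matrix.mul_sum, Matrix.sum_mul]
  have e1 : ∑ z ∈ s, (1 : ℂ) • Q z = A := by
    rw [hsum (fun _ => 1)]; simp only [one_smul, h1, Matrix.mul_one, hAM]
  have e2 : ∑ z ∈ s, z • Q z = B := by
    rw [hsum (fun z => z), hX, hXdef, hcancel]
  have e3 : ∑ z ∈ s, star z • Q z = Bᴴ := by
    rw [← e2, conjTranspose_sum]
    refine Finset.sum_congr rfl fun z _ => ?_
    rw [conjTranspose_smul, (hQ z).isHermitian.eq]
  have e4 : ∑ z ∈ s, (star z * z) • Q z = Bᴴ * A⁻¹ * B := by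
    rw [hsum (fun z => star z * z), hN, hXX, hcancel]
  let v : ℂ → Matrix (Fin 1) (Fin 2) ℂ := fun z => !![1, z]
  let w : Matrix (Fin 1) (Fin 2) ℂ := !![0, 1]
  refine sepState_of_fintype (ι := Option s) _
    (fun o => o.elim (wᴴ * w) (fun z => (v z)ᴴ * v z))
    (fun o => o.elim (C - Bᴴ * A⁻¹ * B) (fun z => Q z)) ?_ ?_ ?_
  · rintro (_ | z) <;> exact posSemidef_conjTranspose_mul_self _
  · rintro (_ | z)
    · exact hS
    · exact hQ _
  · rw [Fintype.sum_option]
    simp only [Option.elim]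
    rw [Finset.sum_coe_sort s (fun z => ((v z)ᴴ * v z) ⊗ₖ Q z)]
    ext ⟨a, i⟩ ⟨b, j⟩
    have f1 := congrFun (congrFun e1 i) j
    have f2 := congrFun (congrFun e2 i) j
    have f3 := congrFun (congrFun e3 i) j
    have f4 := congrFun (congrFun e4 i) j
    simp only [Matrix.sum_apply, Matrix.smul_apply, smul_eq_mul] at f1 f2 f3 f4
    simp only [Matrix.add_apply, Matrix.sum_apply, kroneckerMap_apply, Matrix.sub_apply]
    fin_cases a <;> fin_cases b
    · simpa [blk, v, w, Matrix.mul_apply] using f1.symm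
    · simpa [blk, v, w, Matrix.mul_apply] using f2.symm
    · simpa [blk, v, w, Matrix.mul_apply] using f3.symm
    · rw [← f4]
      simp [blk, v, w, Matrix.mul_apply]
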